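/- Let k be any field, R = k[t,u,x,y]/(xy − tu − 1) the coordinate ring of SL₂, and ρ₁* : R → k[s,t] the k-algebra homomorphism induced by t ↦ t, u ↦ s, x ↦ 1, y ↦ 1 + st (the comorphism of the standard embedding ρ₁ : 𝔸² ↪ SL₂, (s,t) ↦ ((1,t),(s,1+st))). Let φ be a k-algebra automorphism of k[s,t] and set f = φ(s), g = φ(t). Then there exists a k-algebra automorphism Φ of R with φ ∘ ρ₁* = ρ₁* ∘ Φ (i.e., the automorphism of 𝔸² corresponding to φ extends to an automorphism of SL₂ via ρ₁) if and only if the Jacobian determinant (∂f/∂s)(∂g/∂t) − (∂f/∂t)(∂g/∂s), which is a nonzero element of k, equals 1 or −1. -/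

import Mathlib

open MvPolynomial

noncomputable section

variable (k : Type*) [Field k]

/-- The polynomial `x*y - t*u - 1` defining `SL₂` inside `𝔸⁴ = Spec k[t,u,x,y]`
(variables: `0 = t`, `1 = u`, `2 = x`, `3 = y`). -/
def sl2Rel : MvPolynomial (Fin 4) k := X 2 * X 3 - X 0 * X 1 - 1

/-- The coordinate ring `R = k[t,u,x,y]/(xy - tu - 1)` of `SL₂`. -/
abbrev SL2Ring : Type _ := MvPolynomial (Fin 4) k ⧸ Ideal.span {sl2Rel k}

/-- The comorphism of the standard embedding `ρ₁ : 𝔸² ↪ SL₂`, on the level of the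
ambient polynomial ring: `t ↦ t`, `u ↦ s`, `x ↦ 1`, `y ↦ 1 + s*t`
(in `k[s,t]`, variables `0 = s`, `1 = t`). -/
def rho1Aux : MvPolynomial (Fin 4) k →ₐ[k] MvPolynomial (Fin 2) k :=
  aeval ![X 1, X 0, 1, 1 + X 0 * X 1]

lemma rho1Aux_rel : rho1Aux k (sl2Rel k) = 0 := by
  simp [rho1Aux, sl2Rel]
  ring

/-- The comorphism `ρ₁* : R → k[s,t]` of the standard embedding `ρ₁ : 𝔸² ↪ SL₂`,
`(s,t) ↦ ((1,t),(s,1+st))`; it is induced by `t ↦ t`, `u ↦ s`, `x ↦ 1`, `y ↦ 1 + st`. -/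
def rho1Star : SL2Ring k →ₐ[k] MvPolynomial (Fin 2) k :=
  Ideal.Quotient.liftₐ _ (rho1Aux k) (by
    intro a ha
    rw [Ideal.mem_span_singleton] at ha
    obtain ⟨c, rfl⟩ := ha
    rw [map_mul, rho1Aux_rel]
    simp)


namespace SL2Ext

variable {k}

/-- The coordinate `t` on `SL₂`. -/
def rt : SL2Ring k := Ideal.Quotient.mk _ (X 0)
/-- The coordinate `u` on `SL₂`. -/
def ru : SL2Ring k := Ideal.Quotient.mk _ (X 1)
/-- The coordinate `x` on `SL₂`. -/
def rx : SL2Ring k := Ideal.Quotient.mk _ (X 2)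
/-- The coordinate `y` on `SL₂`. -/
def ry : SL2Ring k := Ideal.Quotient.mk _ (X 3)

lemma r_rel : (rx * ry : SL2Ring k) = rt * ru + 1 := by
  have h : (Ideal.Quotient.mk (Ideal.span {sl2Rel k})) (sl2Rel k) = 0 :=
    Ideal.Quotient.eq_zero_iff_mem.2 (Ideal.subset_span rfl)
  have h2 : (rx * ry - rt * ru - 1 : SL2Ring k) = 0 := by
    rw [← h]; rfl
  linear_combination h2

/-- The homomorphism out of `R` given by four elements satisfying the relation. -/
def lift4 {S : Type*} [CommRing S] [Algebra k S] (t u x y : S) (h : x * y = t * u + 1) :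
    SL2Ring k →ₐ[k] S :=
  Ideal.Quotient.liftₐ _ (aeval ![t, u, x, y]) (by
    intro a ha
    rw [Ideal.mem_span_singleton] at ha
    obtain ⟨c, rfl⟩ := ha
    have : (aeval ![t, u, x, y]) (sl2Rel k) = 0 := by
      simp [sl2Rel, h]
    rw [map_mul, this, zero_mul])

section
variable {S : Type*} [CommRing S] [Algebra k S] (t u x y : S) (h : x * y = t * u + 1)

@[simp] lemma lift4_t : lift4 (k := k) t u x y h rt = t := by
  have : lift4 (k := k) t u x y h rt = aeval ![t, u, x, y] (X 0 : MvPolynomial (Fin 4) k) := rfl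
  simp [this]
@[simp] lemma lift4_u : lift4 (k := k) t u x y h ru = u := by
  have : lift4 (k := k) t u x y h ru = aeval ![t, u, x, y] (X 1 : MvPolynomial (Fin 4) k) := rfl
  simp [this]
@[simp] lemma lift4_x : lift4 (k := k) t u x y h rx = x := by
  have : lift4 (k := k) t u x y h rx = aeval ![t, u, x, y] (X 2 : MvPolynomial (Fin 4) k) := rfl
  simp [this]
@[simp] lemma lift4_y : lift4 (k := k) t u x y h ry = y := by
  have : lift4 (k := k) t u x y h ry = aeval ![t, u, x, y] (X 3 : MvPolynomial (Fin 4) k) := rfl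
  simp [this]
end

lemma r_hom_ext {S : Type*} [CommRing S] [Algebra k S] {f g : SL2Ring k →ₐ[k] S}
    (ht : f rt = g rt) (hu : f ru = g ru) (hx : f rx = g rx) (hy : f ry = g ry) : f = g := by
  apply Ideal.Quotient.algHom_ext
  apply MvPolynomial.algHom_ext
  intro i
  fin_cases i
  · exact ht
  · exact hu
  · exact hx
  · exact hy

lemma r_hom_ext' {S : Type*} [CommRing S] [IsDomain S] [Algebra k S] {f g : SL2Ring k →ₐ[k] S}
    (ht : f rt = g rt) (hu : f ru = g ru) (hx : f rx = g rx) (h0 : f rx ≠ 0) : f = g := by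
  refine r_hom_ext ht hu hx (mul_left_cancel₀ h0 ?_)
  rw [← map_mul, hx, ← map_mul, r_rel]
  simp [ht, hu]

@[simp] lemma rho_t : rho1Star k rt = X 1 := by
  have : rho1Star k rt = rho1Aux k (X 0) := rfl
  simp [this, rho1Aux]
@[simp] lemma rho_u : rho1Star k ru = X 0 := by
  have : rho1Star k ru = rho1Aux k (X 1) := rfl
  simp [this, rho1Aux]
@[simp] lemma rho_x : rho1Star k rx = 1 := by
  have : rho1Star k rx = rho1Aux k (X 2) := rfl
  simp [this, rho1Aux]
@[simp] lemma rho_y : rho1Star k ry = 1 + X 0 * X 1 := by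
  have : rho1Star k ry = rho1Aux k (X 3) := rfl
  simp [this, rho1Aux]

/-- Setting a variable to zero changes a polynomial by a multiple of that variable. -/
lemma X_dvd_sub {σ : Type*} [DecidableEq σ] (i : σ) (p : MvPolynomial σ k) :
    X i ∣ p - aeval (Function.update (X : σ → MvPolynomial σ k) i 0) p := by
  induction p using MvPolynomial.induction_on with
  | C a => simp
  | add p q hp hq =>
    have := dvd_add hp hq
    rw [map_add]
    convert this using 1
    ring
  | mul_X p j hp =>
    rw [map_mul, aeval_X]
    by_cases hj : j = i
    · subst hj; simp
    · rw [Function.update_of_ne hj, ← sub_mul]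
      exact Dvd.dvd.mul_right hp _

/-- `x` is a nonzerodivisor of `R`. -/
lemma rx_cancel (r : SL2Ring k) (h : rx * r = 0) : r = 0 := by
  obtain ⟨p, rfl⟩ := Ideal.Quotient.mk_surjective r
  have h1 : X 2 * p ∈ Ideal.span {sl2Rel k} := by
    rw [← Ideal.Quotient.eq_zero_iff_mem, map_mul]; exact h
  rw [Ideal.mem_span_singleton] at h1
  obtain ⟨q, hq⟩ := h1
  let e := aeval (R := k) (Function.update (X : Fin 4 → MvPolynomial (Fin 4) k) 2 0)
  have h2 : (X 0 * X 1 + 1) * e q = 0 := by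
    have := congrArg e hq
    have e0 : e (X 0) = X 0 := by simp [e]
    have e1 : e (X 1) = X 1 := by simp [e]
    have e2 : e (X 2) = 0 := by simp [e]
    simp only [map_mul, sl2Rel, map_sub, e0, e1, e2, map_one] at this
    linear_combination this
  have h3 : (X 0 * X 1 + 1 : MvPolynomial (Fin 4) k) ≠ 0 := by
    intro h0
    have := congrArg (eval (0 : Fin 4 → k)) h0
    simp at this
  have h4 : e q = 0 := (mul_eq_zero.1 h2).resolve_left h3
  obtain ⟨q', hq'⟩ : X 2 ∣ q := by
    have := X_dvd_sub 2 q
    rwa [show aeval (Function.update (X : Fin 4 → MvPolynomial (Fin 4) k) 2 0) q = 0 from h4,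
      sub_zero] at this
  rw [Ideal.Quotient.eq_zero_iff_mem, Ideal.mem_span_singleton]
  refine ⟨q', mul_left_cancel₀ (X_ne_zero (R := k) (2 : Fin 4)) ?_⟩
  rw [hq, hq']; ring

lemma rx_pow_cancel (n : ℕ) (r : SL2Ring k) (h : rx ^ n * r = 0) : r = 0 := by
  induction n with
  | zero => simpa using h
  | succ n ih => exact ih (rx_cancel _ (by rw [← h]; ring))

/-- The inclusion `k[t,u,x] → R`. -/
def iota : MvPolynomial (Fin 3) k →ₐ[k] SL2Ring k := aeval ![rt, ru, rx]

@[simp] lemma iota_t : iota (X 0 : MvPolynomial (Fin 3) k) = rt := by simp [iota]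
@[simp] lemma iota_u : iota (X 1 : MvPolynomial (Fin 3) k) = ru := by simp [iota]
@[simp] lemma iota_x : iota (X 2 : MvPolynomial (Fin 3) k) = rx := by simp [iota]

lemma exists_iota (r : SL2Ring k) : ∃ (n : ℕ) (p : MvPolynomial (Fin 3) k), rx ^ n * r = iota p := by
  obtain ⟨q, rfl⟩ := Ideal.Quotient.mk_surjective r
  induction q using MvPolynomial.induction_on with
  | C a => exact ⟨0, C a, by simp [iota]; rfl⟩
  | add p q hp hq =>
    obtain ⟨n, p', hp⟩ := hp
    obtain ⟨m, q', hq⟩ := hq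
    refine ⟨n + m, X 2 ^ m * p' + X 2 ^ n * q', ?_⟩
    simp only [map_add, map_mul, map_pow, iota_x, ← hp, ← hq]
    ring
  | mul_X p j hp =>
    obtain ⟨n, p', hp⟩ := hp
    have key : ∀ z : SL2Ring k, (∃ q, rx * z = iota q) →
        ∃ (n : ℕ) (p' : MvPolynomial (Fin 3) k),
          rx ^ n * ((Ideal.Quotient.mk (Ideal.span {sl2Rel k})) p * z) = iota p' := by
      rintro z ⟨q, hq⟩
      refine ⟨n + 1, p' * q, ?_⟩
      rw [map_mul, ← hp, ← hq]; ring
    rw [map_mul]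
    apply key
    fin_cases j
    · exact ⟨X 2 * X 0, by simp; rfl⟩
    · exact ⟨X 2 * X 1, by simp; rfl⟩
    · exact ⟨X 2 * X 2, by simp; rfl⟩
    · exact ⟨X 0 * X 1 + 1, by simp [← r_rel]; rfl⟩

/-- `R` embeds into the fraction field of `k[t,u,x]`. -/
def jay : SL2Ring k →ₐ[k] FractionRing (MvPolynomial (Fin 3) k) :=
  lift4 (algebraMap _ _ (X 0 : MvPolynomial (Fin 3) k))
    (algebraMap _ _ (X 1 : MvPolynomial (Fin 3) k))
    (algebraMap _ _ (X 2 : MvPolynomial (Fin 3) k))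
    (algebraMap _ _ (X 0 * X 1 + 1 : MvPolynomial (Fin 3) k) /
      algebraMap _ _ (X 2 : MvPolynomial (Fin 3) k)) (by
    rw [mul_div_cancel₀]
    · simp
    · rw [Ne, FaithfulSMul.algebraMap_eq_zero_iff]
      exact X_ne_zero _)

lemma jay_iota (p : MvPolynomial (Fin 3) k) : jay (iota p) = algebraMap _ _ p := by
  have : jay.comp iota = IsScalarTower.toAlgHom k (MvPolynomial (Fin 3) k)
      (FractionRing (MvPolynomial (Fin 3) k)) := by
    apply MvPolynomial.algHom_ext
    intro i
    fin_cases i <;> simp [jay]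
  exact DFunLike.congr_fun this p

lemma iota_injective : Function.Injective (iota (k := k)) := by
  intro p q h
  have := congrArg jay h
  rw [jay_iota, jay_iota] at this
  exact FaithfulSMul.algebraMap_injective _ _ this

lemma jay_injective : Function.Injective (jay (k := k)) := by
  rw [injective_iff_map_eq_zero]
  intro r hr
  obtain ⟨n, p, hp⟩ := exists_iota r
  have h1 : algebraMap (MvPolynomial (Fin 3) k) (FractionRing (MvPolynomial (Fin 3) k)) p = 0 := by
    rw [← jay_iota, ← hp, map_mul, hr, mul_zero]
  rw [FaithfulSMul.algebraMap_eq_zero_iff] at h1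
  exact rx_pow_cancel n r (by rw [hp, h1, map_zero])

instance : IsDomain (SL2Ring k) := jay_injective.isDomain (jay (k := k)).toRingHom

lemma rx_ne_zero : (rx : SL2Ring k) ≠ 0 := by
  rw [← iota_x, Ne, map_eq_zero_iff _ iota_injective]
  exact X_ne_zero _

/-- The chain rule. -/
lemma chain {σ τ : Type*} [Fintype σ] (v : σ → MvPolynomial τ k) (i : τ) (p : MvPolynomial σ k) :
    pderiv i (aeval v p) = ∑ j, aeval v (pderiv j p) * pderiv i (v j) := by
  classical
  induction p using MvPolynomial.induction_on with
  | C a => simp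
  | add p q hp hq => simp only [map_add, hp, hq, add_mul, Finset.sum_add_distrib]
  | mul_X p j hp =>
    simp only [map_mul, aeval_X, pderiv_mul, hp, map_add, add_mul, Finset.sum_add_distrib,
      Finset.sum_mul, pderiv_X, Pi.single_apply]
    congr 1
    · exact Finset.sum_congr rfl fun _ _ => by ring
    · simp [apply_ite, ite_mul]

lemma isUnit_const {σ : Type*} {p : MvPolynomial σ k} (h : IsUnit p) : ∃ a : k, a ≠ 0 ∧ p = C a := by
  obtain ⟨a, ha, h⟩ := MvPolynomial.isUnit_iff_eq_C_of_isReduced.1 h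
  exact ⟨a, ha.ne_zero, h⟩

/-- `φ` extends to an automorphism of `SL₂`. -/
def Ext (φ : MvPolynomial (Fin 2) k ≃ₐ[k] MvPolynomial (Fin 2) k) : Prop :=
  ∃ Φ : SL2Ring k ≃ₐ[k] SL2Ring k,
    φ.toAlgHom.comp (rho1Star k) = (rho1Star k).comp Φ.toAlgHom

lemma ext_trans {φ ψ : MvPolynomial (Fin 2) k ≃ₐ[k] MvPolynomial (Fin 2) k}
    (h1 : Ext φ) (h2 : Ext ψ) : Ext (φ.trans ψ) := by
  obtain ⟨Φ, hΦ⟩ := h1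
  obtain ⟨Ψ, hΨ⟩ := h2
  refine ⟨Φ.trans Ψ, ?_⟩
  ext1 r
  have e1 : ∀ r, φ (rho1Star k r) = rho1Star k (Φ r) := fun r => DFunLike.congr_fun hΦ r
  have e2 : ∀ r, ψ (rho1Star k r) = rho1Star k (Ψ r) := fun r => DFunLike.congr_fun hΨ r
  change ψ (φ (rho1Star k r)) = rho1Star k (Ψ (Φ r))
  rw [e1, e2]

lemma ext_symm {φ : MvPolynomial (Fin 2) k ≃ₐ[k] MvPolynomial (Fin 2) k}
    (h1 : Ext φ) : Ext φ.symm := by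
  obtain ⟨Φ, hΦ⟩ := h1
  refine ⟨Φ.symm, ?_⟩
  ext1 r
  have e1 : φ (rho1Star k (Φ.symm r)) = rho1Star k (Φ (Φ.symm r)) :=
    DFunLike.congr_fun hΦ (Φ.symm r)
  change φ.symm (rho1Star k r) = rho1Star k (Φ.symm r)
  rw [AlgEquiv.apply_symm_apply] at e1
  rw [← e1, AlgEquiv.symm_apply_apply]

/-- Criterion for extension, using homomorphisms fixing `x`. -/
lemma ext_of_homs (φ : MvPolynomial (Fin 2) k ≃ₐ[k] MvPolynomial (Fin 2) k)
    (Φ Ψ : SL2Ring k →ₐ[k] SL2Ring k)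
    (hx : Φ rx = rx) (hx' : Ψ rx = rx)
    (h1 : Φ (Ψ rt) = rt) (h2 : Φ (Ψ ru) = ru) (h3 : Ψ (Φ rt) = rt) (h4 : Ψ (Φ ru) = ru)
    (ht : rho1Star k (Φ rt) = φ (X 1)) (hu : rho1Star k (Φ ru) = φ (X 0)) : Ext φ := by
  have a1 : Φ.comp Ψ = AlgHom.id k _ :=
    r_hom_ext' (by simpa using h1) (by simpa using h2) (by simp [hx, hx'])
      (by simp [hx, hx', rx_ne_zero])
  have a2 : Ψ.comp Φ = AlgHom.id k _ :=
    r_hom_ext' (by simpa using h3) (by simpa using h4) (by simp [hx, hx'])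
      (by simp [hx, hx', rx_ne_zero])
  refine ⟨AlgEquiv.ofAlgHom Φ Ψ a1 a2, ?_⟩
  apply r_hom_ext'
  · simp [ht]
  · simp [hu]
  · simp [hx]
  · simp

/-- The shear `s ↦ s + c t + d`, `t ↦ t`. -/
def shear (c d : k) : MvPolynomial (Fin 2) k ≃ₐ[k] MvPolynomial (Fin 2) k :=
  AlgEquiv.ofAlgHom (aeval ![X 0 + C c * X 1 + C d, X 1]) (aeval ![X 0 - C c * X 1 - C d, X 1])
    (by
      apply MvPolynomial.algHom_ext
      intro i
      fin_cases i
      · simp [algHom_C, algebraMap_eq]; ring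
      · simp)
    (by
      apply MvPolynomial.algHom_ext
      intro i
      fin_cases i
      · simp [algHom_C, algebraMap_eq]; ring
      · simp)

lemma shear_0 (c d : k) : shear c d (X 0) = X 0 + C c * X 1 + C d := by simp [shear]
lemma shear_1 (c d : k) : shear c d (X 1) = X 1 := by simp [shear]

/-- The automorphism of `R` extending a shear. -/
def shearR (c d : k) : SL2Ring k →ₐ[k] SL2Ring k :=
  lift4 rt (ru + rx * (algebraMap k _ c * rt + algebraMap k _ d)) rx
    (ry + rt * (algebraMap k _ c * rt + algebraMap k _ d)) (by
      rw [mul_add, r_rel]; ring)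

lemma ext_shear (c d : k) : Ext (shear c d) := by
  refine ext_of_homs _ (shearR c d) (shearR (-c) (-d)) ?_ ?_ ?_ ?_ ?_ ?_ ?_ ?_
  · simp [shearR]
  · simp [shearR]
  · simp [shearR]
  · simp [shearR]; ring
  · simp [shearR]
  · simp [shearR]; ring
  · simp [shearR, shear_1]
  · simp [shearR, shear_0, algebraMap_eq]; ring

/-- The swap `s ↔ t`. -/
def swp : MvPolynomial (Fin 2) k ≃ₐ[k] MvPolynomial (Fin 2) k :=
  AlgEquiv.ofAlgHom (aeval ![X 1, X 0]) (aeval ![X 1, X 0])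
    (by
      apply MvPolynomial.algHom_ext
      intro i
      fin_cases i <;> simp)
    (by
      apply MvPolynomial.algHom_ext
      intro i
      fin_cases i <;> simp)

lemma swp_0 : (swp : MvPolynomial (Fin 2) k ≃ₐ[k] _) (X 0) = X 1 := by simp [swp]
lemma swp_1 : (swp : MvPolynomial (Fin 2) k ≃ₐ[k] _) (X 1) = X 0 := by simp [swp]

/-- The transposition on `R`. -/
def swpR : SL2Ring k →ₐ[k] SL2Ring k := lift4 ru rt rx ry (by rw [r_rel]; ring)

lemma ext_swp : Ext (k := k) swp := by
  refine ext_of_homs _ swpR swpR ?_ ?_ ?_ ?_ ?_ ?_ ?_ ?_ <;> simp [swpR, swp_0, swp_1]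

/-- First order expansion of a polynomial at the origin. -/
lemma expand (p : MvPolynomial (Fin 2) k) : ∃ P : MvPolynomial (Fin 3) k,
    aeval ![X 2 * X 1, X 2 * X 0] p = C (constantCoeff p) +
      X 2 * (C (constantCoeff (pderiv 0 p)) * X 1 + C (constantCoeff (pderiv 1 p)) * X 0) + X 2 ^ 2 * P := by
  induction p using MvPolynomial.induction_on with
  | C a => exact ⟨0, by simp [algHom_C, algebraMap_eq]⟩
  | add p q hp hq =>
    obtain ⟨P, hP⟩ := hp
    obtain ⟨Q, hQ⟩ := hq
    refine ⟨P + Q, ?_⟩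
    rw [map_add, hP, hQ]
    simp only [map_add]
    ring
  | mul_X p i hp =>
    obtain ⟨P, hP⟩ := hp
    rw [map_mul, hP, aeval_X]
    fin_cases i
    · refine ⟨(C (constantCoeff (pderiv 0 p)) * X 1 + C (constantCoeff (pderiv 1 p)) * X 0) * X 1
        + X 2 * P * X 1, ?_⟩
      simp [pderiv_X]
      ring
    · refine ⟨(C (constantCoeff (pderiv 0 p)) * X 1 + C (constantCoeff (pderiv 1 p)) * X 0) * X 0
        + X 2 * P * X 0, ?_⟩
      simp [pderiv_X]
      ring

/-- The first order data of `φ` at the origin is trivial. -/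
structure Tangent (φ : MvPolynomial (Fin 2) k ≃ₐ[k] MvPolynomial (Fin 2) k) : Prop where
  c0 : constantCoeff (φ (X 0)) = 0
  c1 : constantCoeff (φ (X 1)) = 0
  d00 : constantCoeff (pderiv 0 (φ (X 0))) = 1
  d01 : constantCoeff (pderiv 1 (φ (X 0))) = 0
  d10 : constantCoeff (pderiv 0 (φ (X 1))) = 0
  d11 : constantCoeff (pderiv 1 (φ (X 1))) = 1

lemma equiv_eq_aeval (φ : MvPolynomial (Fin 2) k ≃ₐ[k] MvPolynomial (Fin 2) k)
    (p : MvPolynomial (Fin 2) k) : φ p = aeval ![φ (X 0), φ (X 1)] p := by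
  have : φ.toAlgHom = aeval ![φ (X 0), φ (X 1)] := by
    apply MvPolynomial.algHom_ext
    intro i
    fin_cases i <;> simp
  exact DFunLike.congr_fun this p

lemma Tangent.eval {φ : MvPolynomial (Fin 2) k ≃ₐ[k] MvPolynomial (Fin 2) k} (h : Tangent φ)
    (p : MvPolynomial (Fin 2) k) : constantCoeff (φ p) = constantCoeff p := by
  have : (constantCoeff (R := k)).comp φ.toAlgHom.toRingHom = constantCoeff := by
    apply MvPolynomial.ringHom_ext
    · intro r
      have : φ (C r) = C r := φ.commutes r
      simp [this]
    · intro i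
      fin_cases i
      · simpa using h.c0
      · simpa using h.c1
  exact DFunLike.congr_fun this p

lemma Tangent.eval_pderiv {φ : MvPolynomial (Fin 2) k ≃ₐ[k] MvPolynomial (Fin 2) k}
    (h : Tangent φ) (p : MvPolynomial (Fin 2) k) (i : Fin 2) :
    constantCoeff (pderiv i (φ p)) = constantCoeff (pderiv i p) := by
  rw [equiv_eq_aeval φ p, chain, Fin.sum_univ_two, ← equiv_eq_aeval, ← equiv_eq_aeval]
  simp only [Matrix.cons_val_zero, Matrix.cons_val_one, map_add, map_mul, h.eval]
  fin_cases i
  · simp [h.d00, h.d10]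
  · simp [h.d01, h.d11]

lemma Tangent.symm {φ : MvPolynomial (Fin 2) k ≃ₐ[k] MvPolynomial (Fin 2) k} (h : Tangent φ) :
    Tangent φ.symm where
  c0 := by rw [← h.eval]; simp
  c1 := by rw [← h.eval]; simp
  d00 := by rw [← h.eval_pderiv]; simp
  d01 := by rw [← h.eval_pderiv]; simp [pderiv_X]
  d10 := by rw [← h.eval_pderiv]; simp [pderiv_X]
  d11 := by rw [← h.eval_pderiv]; simp

lemma Tangent.exists_hom {φ : MvPolynomial (Fin 2) k ≃ₐ[k] MvPolynomial (Fin 2) k}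
    (h : Tangent φ) : ∃ Φ : SL2Ring k →ₐ[k] SL2Ring k, Φ rx = rx ∧
      ∀ p, Φ (aeval ![rx * ru, rx * rt] p) = aeval ![rx * ru, rx * rt] (φ p) := by
  have key : ∀ q : MvPolynomial (Fin 2) k,
      iota (aeval ![X 2 * X 1, X 2 * X 0] q) = aeval ![rx * ru, (rx * rt : SL2Ring k)] q := by
    intro q
    have : (iota (k := k)).comp (aeval ![X 2 * X 1, X 2 * X 0]) =
        aeval ![rx * ru, rx * rt] := by
      apply MvPolynomial.algHom_ext
      intro i
      fin_cases i <;> simp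
    exact DFunLike.congr_fun this q
  obtain ⟨A, hA⟩ := expand (φ (X 0))
  obtain ⟨B, hB⟩ := expand (φ (X 1))
  have hA := congrArg iota hA
  have hB := congrArg iota hB
  rw [key, h.c0, h.d00, h.d01] at hA
  rw [key, h.c1, h.d10, h.d11] at hB
  simp only [map_add, map_mul, map_zero, map_one, iota_t, iota_x, iota_u, zero_mul, one_mul,
    add_zero, zero_add, map_pow] at hA hB
  refine ⟨lift4 (rt + rx * iota B) (ru + rx * iota A) rx
    (ry + rt * iota A + ru * iota B + rx * iota A * iota B) ?_, ?_, ?_⟩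
  · linear_combination r_rel (k := k)
  · simp
  · intro p
    rw [equiv_eq_aeval φ p, ← AlgHom.comp_apply, ← AlgHom.comp_apply]
    congr 1
    apply MvPolynomial.algHom_ext
    intro i
    fin_cases i
    · simp [hA]; ring
    · simp [hB]; ring

lemma Tangent.ext {φ : MvPolynomial (Fin 2) k ≃ₐ[k] MvPolynomial (Fin 2) k}
    (h : Tangent φ) : Ext φ := by
  obtain ⟨Φ, hx, hΦ⟩ := h.exists_hom
  obtain ⟨Ψ, hx', hΨ⟩ := h.symm.exists_hom
  have c1 : ∀ p : MvPolynomial (Fin 2) k, Φ (Ψ (aeval ![rx * ru, rx * rt] p)) = aeval ![rx * ru, rx * rt] p := by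
    intro p; rw [hΨ, hΦ]; simp
  have c2 : ∀ p : MvPolynomial (Fin 2) k, Ψ (Φ (aeval ![rx * ru, rx * rt] p)) = aeval ![rx * ru, rx * rt] p := by
    intro p; rw [hΦ, hΨ]; simp
  have r : ∀ p : MvPolynomial (Fin 2) k, rho1Star k (aeval ![rx * ru, rx * rt] p) = p := by
    intro p
    have : (rho1Star k).comp (aeval ![rx * ru, rx * rt]) = AlgHom.id k _ := by
      apply MvPolynomial.algHom_ext
      intro i
      fin_cases i <;> simp
    exact DFunLike.congr_fun this p
  refine ext_of_homs φ Φ Ψ hx hx' ?_ ?_ ?_ ?_ ?_ ?_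
  · have := c1 (X 1)
    simp [hx, hx'] at this
    exact this.resolve_right rx_ne_zero
  · have := c1 (X 0)
    simp [hx, hx'] at this
    exact this.resolve_right rx_ne_zero
  · have := c2 (X 1)
    simp [hx, hx'] at this
    exact this.resolve_right rx_ne_zero
  · have := c2 (X 0)
    simp [hx, hx'] at this
    exact this.resolve_right rx_ne_zero
  · have := congrArg (rho1Star k) (hΦ (X 1))
    rw [r] at this
    simpa [hx] using this
  · have := congrArg (rho1Star k) (hΦ (X 0))
    rw [r] at this
    simpa [hx] using this

lemma ext_of_shear {φ : MvPolynomial (Fin 2) k ≃ₐ[k] MvPolynomial (Fin 2) k} (c d : k)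
    (h : Ext ((shear c d).trans φ)) : Ext φ := by
  have := ext_trans (ext_symm (ext_shear c d)) h
  convert this using 1
  ext1 p
  simp

lemma ext_of_swp {φ : MvPolynomial (Fin 2) k ≃ₐ[k] MvPolynomial (Fin 2) k}
    (h : Ext (swp.trans φ)) : Ext φ := by
  have := ext_trans (ext_symm ext_swp) h
  convert this using 1
  ext1 p
  simp

/-- First order data of `φ` at the origin. -/
structure Lin (φ : MvPolynomial (Fin 2) k ≃ₐ[k] MvPolynomial (Fin 2) k)
    (a b e a' b' e' : k) : Prop where
  c0 : constantCoeff (φ (X 0)) = a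
  d00 : constantCoeff (pderiv 0 (φ (X 0))) = b
  d01 : constantCoeff (pderiv 1 (φ (X 0))) = e
  c1 : constantCoeff (φ (X 1)) = a'
  d10 : constantCoeff (pderiv 0 (φ (X 1))) = b'
  d11 : constantCoeff (pderiv 1 (φ (X 1))) = e'

lemma Lin.shear {φ : MvPolynomial (Fin 2) k ≃ₐ[k] MvPolynomial (Fin 2) k}
    {a b e a' b' e' : k} (h : Lin φ a b e a' b' e') (c d : k) :
    Lin ((shear c d).trans φ) (a + c * a' + d) (b + c * b') (e + c * e') a' b' e' := by
  have hC : ∀ z : k, φ (C z) = C z := fun z => φ.commutes z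
  constructor <;>
  simp [shear_0, shear_1, hC, h.c0, h.c1, h.d00, h.d01, h.d10, h.d11]

lemma Lin.swp {φ : MvPolynomial (Fin 2) k ≃ₐ[k] MvPolynomial (Fin 2) k}
    {a b e a' b' e' : k} (h : Lin φ a b e a' b' e') :
    Lin (swp.trans φ) a' b' e' a b e := by
  constructor <;>
  simp [swp_0, swp_1, h.c0, h.c1, h.d00, h.d01, h.d10, h.d11]

lemma ext_lin1 {φ : MvPolynomial (Fin 2) k ≃ₐ[k] MvPolynomial (Fin 2) k}
    {a e a' b' e' : k} (h : Lin φ a 1 e a' b' e') (hd : e' - e * b' = 1) : Ext φ := by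
  apply ext_of_swp
  have h1 := h.swp
  apply ext_of_shear (-b') (b' * a - a')
  have h2 := h1.shear (-b') (b' * a - a')
  apply ext_of_swp
  have h3 := h2.swp
  apply ext_of_shear (-e) (-a)
  have h4 := h3.shear (-e) (-a)
  apply Tangent.ext
  constructor
  · rw [h4.c0]; ring
  · rw [h4.c1]; ring
  · rw [h4.d00]; ring
  · rw [h4.d01]; linear_combination -e * hd
  · rw [h4.d10]; ring
  · rw [h4.d11]; linear_combination hd

lemma ext_lin2 {φ : MvPolynomial (Fin 2) k ≃ₐ[k] MvPolynomial (Fin 2) k}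
    {a b e a' b' e' : k} (h : Lin φ a b e a' b' e') (hd : b * e' - e * b' = 1) (hb' : b' ≠ 0) :
    Ext φ := by
  apply ext_of_shear ((1 - b) / b') 0
  have h1 := h.shear ((1 - b) / b') 0
  have : b + (1 - b) / b' * b' = 1 := by field_simp; ring
  rw [this] at h1
  apply ext_lin1 h1
  field_simp
  linear_combination hd

lemma ext_lin3 {φ : MvPolynomial (Fin 2) k ≃ₐ[k] MvPolynomial (Fin 2) k}
    {a b e a' b' e' : k} (h : Lin φ a b e a' b' e') (hd : b * e' - e * b' = 1) :
    Ext φ := by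
  by_cases hb' : b' = 0
  · subst hb'
    have hb : b ≠ 0 := by rintro rfl; simp at hd
    apply ext_of_swp
    apply ext_of_shear 1 0
    apply ext_of_swp
    exact ext_lin2 (h.swp.shear 1 0).swp (by linear_combination hd) (by simpa using hb)
  · exact ext_lin2 h hd hb'

theorem ext_of_jacobian (φ : MvPolynomial (Fin 2) k ≃ₐ[k] MvPolynomial (Fin 2) k)
    (h : pderiv 0 (φ (X 0)) * pderiv 1 (φ (X 1)) - pderiv 1 (φ (X 0)) * pderiv 0 (φ (X 1)) = 1 ∨
       pderiv 0 (φ (X 0)) * pderiv 1 (φ (X 1)) - pderiv 1 (φ (X 0)) * pderiv 0 (φ (X 1)) = -1) :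
    Ext φ := by
  have hl : Lin φ _ _ _ _ _ _ := ⟨rfl, rfl, rfl, rfl, rfl, rfl⟩
  rcases h with h | h
  · have := congrArg constantCoeff h
    simp only [map_sub, map_mul, map_one] at this
    exact ext_lin3 hl this
  · have := congrArg constantCoeff h
    simp only [map_sub, map_mul, map_one, map_neg] at this
    exact ext_of_swp (ext_lin3 hl.swp (by linear_combination -this))

/-! ### The fibre `x = 0` -/

/-- The homomorphism `k[t,u] → k(T)`, `t ↦ T`, `u ↦ -1/T`. -/
def chiB : MvPolynomial (Fin 2) k →ₐ[k] RatFunc k := aeval ![RatFunc.X, -(RatFunc.X)⁻¹]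

@[simp] lemma chiB_0 : chiB (X 0 : MvPolynomial (Fin 2) k) = RatFunc.X := by simp [chiB]
@[simp] lemma chiB_1 : chiB (X 1 : MvPolynomial (Fin 2) k) = -(RatFunc.X)⁻¹ := by simp [chiB]

lemma aeval_ratX (g : Polynomial k) :
    Polynomial.aeval (RatFunc.X : RatFunc k) g = algebraMap (Polynomial k) (RatFunc k) g := by
  have : (Polynomial.aeval (RatFunc.X : RatFunc k)) =
      IsScalarTower.toAlgHom k (Polynomial k) (RatFunc k) := by
    apply Polynomial.algHom_ext
    simp
  exact DFunLike.congr_fun this g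

lemma tu_normal (p : MvPolynomial (Fin 2) k) : ∃ (N : ℕ) (g : Polynomial k),
    (X 0 * X 1 + 1 : MvPolynomial (Fin 2) k) ∣ p - X 1 ^ N * Polynomial.aeval (X 0) g := by
  set I := Ideal.span {(X 0 * X 1 + 1 : MvPolynomial (Fin 2) k)} with hI
  have key : ∀ a b : MvPolynomial (Fin 2) k, (X 0 * X 1 + 1) ∣ a - b ↔
      Ideal.Quotient.mk I a = Ideal.Quotient.mk I b := by
    intro a b
    rw [Ideal.Quotient.eq, hI, Ideal.mem_span_singleton]
  have hrel : Ideal.Quotient.mk I (X 0) * Ideal.Quotient.mk I (X 1) = -1 := by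
    rw [← map_mul, ← map_one (Ideal.Quotient.mk I), ← map_neg, ← key]
    exact ⟨1, by ring⟩
  simp only [key]
  induction p using MvPolynomial.induction_on with
  | C a => exact ⟨0, Polynomial.C a, by simp [MvPolynomial.algebraMap_eq]⟩
  | add p q hp hq =>
    obtain ⟨N, g, hp⟩ := hp
    obtain ⟨M, h, hq⟩ := hq
    refine ⟨N + M, (-Polynomial.X) ^ M * g + (-Polynomial.X) ^ N * h, ?_⟩
    simp only [map_add, map_mul, map_pow, hp, hq, map_neg, Polynomial.aeval_X]
    have h1 : (-Ideal.Quotient.mk I (X 0)) * Ideal.Quotient.mk I (X 1) = 1 := by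
      linear_combination -hrel
    have hM : (-Ideal.Quotient.mk I (X 0)) ^ M * Ideal.Quotient.mk I (X 1) ^ M = 1 := by
      rw [← mul_pow, h1, one_pow]
    have hN : (-Ideal.Quotient.mk I (X 0)) ^ N * Ideal.Quotient.mk I (X 1) ^ N = 1 := by
      rw [← mul_pow, h1, one_pow]
    rw [pow_add]
    linear_combination (-Ideal.Quotient.mk I (X 1) ^ N * Ideal.Quotient.mk I (Polynomial.aeval (X 0) g)) * hM + (-Ideal.Quotient.mk I (X 1) ^ M * Ideal.Quotient.mk I (Polynomial.aeval (X 0) h)) * hN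
  | mul_X p j hp =>
    obtain ⟨N, g, hp⟩ := hp
    fin_cases j
    · refine ⟨N, g * Polynomial.X, ?_⟩
      simp only [map_mul, hp, map_pow, Polynomial.aeval_X]
      simp; ring
    · refine ⟨N + 1, g, ?_⟩
      simp only [map_mul, hp, map_pow]
      simp; ring

lemma chiB_zero {p : MvPolynomial (Fin 2) k} (h : chiB p = 0) :
    (X 0 * X 1 + 1 : MvPolynomial (Fin 2) k) ∣ p := by
  obtain ⟨N, g, q, hq⟩ := tu_normal p
  have h1 := congrArg chiB hq
  have hX : (RatFunc.X : RatFunc k) ≠ 0 := RatFunc.X_ne_zero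
  have h2 : chiB (Polynomial.aeval (X 0 : MvPolynomial (Fin 2) k) g) =
      algebraMap (Polynomial k) (RatFunc k) g := by
    rw [← aeval_ratX, ← chiB_0, Polynomial.aeval_algHom_apply]
  simp only [map_sub, map_mul, map_pow, h, h2, map_add, chiB_0, chiB_1, map_one] at h1
  have h3 : (RatFunc.X : RatFunc k) * -(RatFunc.X)⁻¹ + 1 = 0 := by
    field_simp; ring
  rw [h3, zero_mul, zero_sub, neg_eq_zero, mul_eq_zero] at h1
  have h4 : algebraMap (Polynomial k) (RatFunc k) g = 0 :=
    h1.resolve_left (pow_ne_zero _ (neg_ne_zero.2 (inv_ne_zero hX)))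
  rw [FaithfulSMul.algebraMap_eq_zero_iff] at h4
  exact ⟨q, by rw [← hq, h4]; simp⟩

lemma chiB_dvd {p : MvPolynomial (Fin 2) k}
    (h : (X 0 * X 1 + 1 : MvPolynomial (Fin 2) k) ∣ p) : chiB p = 0 := by
  obtain ⟨q, rfl⟩ := h
  have hX : (RatFunc.X : RatFunc k) ≠ 0 := RatFunc.X_ne_zero
  have h3 : (RatFunc.X : RatFunc k) * -(RatFunc.X)⁻¹ + 1 = 0 := by
    field_simp; ring
  simp only [map_mul, map_add, chiB_0, chiB_1, map_one, h3, zero_mul]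

/-- The homomorphism `R → k(T)` with `x, y ↦ 0`, `t ↦ T`. -/
def chi : SL2Ring k →ₐ[k] RatFunc k := lift4 RatFunc.X (-(RatFunc.X)⁻¹) 0 0 (by
  have hX : (RatFunc.X : RatFunc k) ≠ 0 := RatFunc.X_ne_zero
  field_simp; ring)

@[simp] lemma chi_t : chi (rt : SL2Ring k) = RatFunc.X := by simp [chi]
@[simp] lemma chi_u : chi (ru : SL2Ring k) = -(RatFunc.X)⁻¹ := by simp [chi]
@[simp] lemma chi_x : chi (rx : SL2Ring k) = 0 := by simp [chi]

/-- Setting `x = 0` in `k[t,u,x]`. -/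
def eps0 : MvPolynomial (Fin 3) k →ₐ[k] MvPolynomial (Fin 2) k := aeval ![X 0, X 1, 0]
@[simp] lemma eps0_0 : eps0 (X 0 : MvPolynomial (Fin 3) k) = X 0 := by simp [eps0]
@[simp] lemma eps0_1 : eps0 (X 1 : MvPolynomial (Fin 3) k) = X 1 := by simp [eps0]
@[simp] lemma eps0_2 : eps0 (X 2 : MvPolynomial (Fin 3) k) = 0 := by simp [eps0]
/-- The inclusion `k[t,u] → k[t,u,x]`. -/
def emb : MvPolynomial (Fin 2) k →ₐ[k] MvPolynomial (Fin 3) k := aeval ![X 0, X 1]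
@[simp] lemma emb_0 : emb (X 0 : MvPolynomial (Fin 2) k) = X 0 := by simp [emb]
@[simp] lemma emb_1 : emb (X 1 : MvPolynomial (Fin 2) k) = X 1 := by simp [emb]

lemma chi_iota (p : MvPolynomial (Fin 3) k) : chi (iota p) = chiB (eps0 p) := by
  have : chi.comp iota = (chiB (k := k)).comp eps0 := by
    apply MvPolynomial.algHom_ext
    intro i
    fin_cases i <;> simp
  exact DFunLike.congr_fun this p

lemma eps0_emb (p : MvPolynomial (Fin 2) k) : eps0 (emb p) = p := by
  have : (eps0 (k := k)).comp emb = AlgHom.id _ _ := by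
    apply MvPolynomial.algHom_ext
    intro i
    fin_cases i <;> simp
  exact DFunLike.congr_fun this p

lemma emb_eps0 (p : MvPolynomial (Fin 3) k) : X 2 ∣ p - emb (eps0 p) := by
  have : (emb (k := k)).comp eps0 =
      aeval (Function.update (X : Fin 3 → MvPolynomial (Fin 3) k) 2 0) := by
    apply MvPolynomial.algHom_ext
    intro i
    fin_cases i <;> simp
  have h := X_dvd_sub 2 p
  rw [← this] at h
  exact h

lemma X2_dvd {p : MvPolynomial (Fin 3) k} (h : eps0 p = 0) : X 2 ∣ p := by
  simpa [h] using emb_eps0 p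

/-! ### Units of `R` -/

lemma unit_const {r s : SL2Ring k} (h : r * s = 1) : ∃ c : k, c ≠ 0 ∧ r = algebraMap k _ c := by
  obtain ⟨n, p, hp⟩ := exists_iota r
  obtain ⟨m, q, hq⟩ := exists_iota s
  have h1 : p * q = X 2 ^ (n + m) := by
    apply iota_injective
    rw [map_mul, ← hp, ← hq, map_pow, iota_x, pow_add]
    linear_combination rx ^ n * rx ^ m * h
  obtain ⟨i, hi, hass⟩ := (dvd_prime_pow (X_prime (R := k) (i := (2 : Fin 3))) _).1
    (Dvd.intro _ h1)
  obtain ⟨w, hw⟩ := hass.symm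
  obtain ⟨c, hc, hwc⟩ := isUnit_const w.isUnit
  rw [hwc] at hw
  have hcc : iota (C c : MvPolynomial (Fin 3) k) = algebraMap k _ c := by
    rw [← MvPolynomial.algebraMap_eq, AlgHom.commutes]
  have hnu : ∀ z : SL2Ring k, rx * z ≠ 1 := by
    intro z hz
    have := congrArg chi hz
    simp at this
  have h2 : rx ^ n * r = rx ^ i * algebraMap k _ c := by
    rw [hp, ← hw, map_mul, map_pow, iota_x, hcc]
  refine ⟨c, hc, ?_⟩
  rcases lt_trichotomy n i with hlt | rfl | hlt
  · exfalso
    obtain ⟨e, rfl⟩ := Nat.exists_eq_add_of_lt hlt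
    have h3 : r = rx ^ (e + 1) * algebraMap k _ c := by
      apply mul_left_cancel₀ (pow_ne_zero n rx_ne_zero)
      rw [h2]; ring
    apply hnu (rx ^ e * algebraMap k _ c * s)
    rw [← h, h3]; ring
  · exact mul_left_cancel₀ (pow_ne_zero n rx_ne_zero) h2
  · exfalso
    obtain ⟨e, rfl⟩ := Nat.exists_eq_add_of_lt hlt
    have h3 : rx ^ (e + 1) * r = algebraMap k _ c := by
      apply mul_left_cancel₀ (pow_ne_zero i rx_ne_zero)
      rw [← h2]; ring
    apply hnu (rx ^ e * r * algebraMap k _ c⁻¹)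
    have : (algebraMap k (SL2Ring k) c) * algebraMap k _ c⁻¹ = 1 := by
      rw [← map_mul, mul_inv_cancel₀ hc, map_one]
    rw [← this, ← h3]; ring

/-! ### The fibres `x = c` -/

/-- Restriction to the fibre `x = c`. -/
def eps (c : k) (hc : c ≠ 0) : SL2Ring k →ₐ[k] MvPolynomial (Fin 2) k :=
  lift4 (X 1) (X 0) (C c) (C c⁻¹ * (1 + X 0 * X 1)) (by
    rw [← mul_assoc, ← C_mul, mul_inv_cancel₀ hc, C_1]; ring)

universe uS

lemma exists_quot {S : Type uS} [CommRing S] [Algebra k S] (z : S) :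
    ∃ (Q : Type uS) (_ : CommRing Q) (_ : Algebra k Q) (q : S →ₐ[k] Q),
      q z = 0 ∧ ∀ r, q r = 0 → z ∣ r := by
  refine ⟨S ⧸ Ideal.span {z}, inferInstance, inferInstance,
    Ideal.Quotient.mkₐ k (Ideal.span {z}), ?_, ?_⟩
  · exact Ideal.Quotient.eq_zero_iff_mem.2 (Ideal.subset_span rfl)
  · intro r hr
    rw [← Ideal.mem_span_singleton]
    exact Ideal.Quotient.eq_zero_iff_mem.1 hr

lemma eps_ker (c : k) (hc : c ≠ 0) {r : SL2Ring k} (h : eps c hc r = 0) :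
    (rx - algebraMap k _ c) ∣ r := by
  obtain ⟨Q, _, _, q, hq0, hq⟩ := exists_quot (k := k) (rx - algebraMap k (SL2Ring k) c)
  have hx : q rx = algebraMap k Q c := by
    rw [map_sub, AlgHom.commutes] at hq0
    exact sub_eq_zero.1 hq0
  have key : q = (q.comp (aeval ![ru, rt])).comp (eps c hc) := by
    have hcc : algebraMap k Q c⁻¹ * algebraMap k Q c = 1 := by
      rw [← map_mul, inv_mul_cancel₀ hc, map_one]
    have aC : ∀ a : k, aeval (R := k) ![(ru : SL2Ring k), rt] (C a) = algebraMap k _ a := by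
      intro a; simp
    apply r_hom_ext
    · simp only [AlgHom.comp_apply, eps, lift4_t]; simp
    · simp only [AlgHom.comp_apply, eps, lift4_u]; simp
    · simp only [AlgHom.comp_apply, eps, lift4_x]
      rw [hx, aC, AlgHom.commutes]
    · simp only [AlgHom.comp_apply, eps, lift4_y]
      have e1 : aeval (R := k) ![(ru : SL2Ring k), rt] (C c⁻¹ * (1 + X 0 * X 1)) =
          algebraMap k _ c⁻¹ * (rx * ry) := by
        rw [map_mul, aC, r_rel]
        simp; left; ring
      rw [e1, map_mul, map_mul, hx, AlgHom.commutes, ← mul_assoc, hcc, one_mul]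
  apply hq
  have h2 := DFunLike.congr_fun key r
  rw [h2, AlgHom.comp_apply, h, map_zero]

lemma rho_ker {r : SL2Ring k} (h : rho1Star k r = 0) : (rx - 1) ∣ r := by
  have : rho1Star k = eps 1 one_ne_zero := by
    apply r_hom_ext
    · simp [eps]
    · simp [eps]
    · simp [eps]
    · simp [eps]
  rw [this] at h
  simpa using eps_ker 1 one_ne_zero h

lemma ext_x {φ : MvPolynomial (Fin 2) k ≃ₐ[k] MvPolynomial (Fin 2) k} {Φ : SL2Ring k ≃ₐ[k] SL2Ring k}
    (h : ∀ r, φ (rho1Star k r) = rho1Star k (Φ r)) : Φ rx = rx := by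
  have h' : ∀ r, φ.symm (rho1Star k r) = rho1Star k (Φ.symm r) := by
    intro r
    rw [AlgEquiv.symm_apply_eq, h, AlgEquiv.apply_symm_apply]
  obtain ⟨a, ha⟩ : (rx - 1) ∣ Φ (rx - 1) := rho_ker (by rw [← h]; simp)
  obtain ⟨b, hb⟩ : (rx - 1) ∣ Φ.symm (rx - 1) := rho_ker (by rw [← h']; simp)
  have hne : (rx - 1 : SL2Ring k) ≠ 0 := by
    intro h0
    have := congrArg chi h0
    simp at this
  have hab : a * Φ b = 1 := by
    have h1 := congrArg Φ hb
    rw [AlgEquiv.apply_symm_apply, map_mul, ha] at h1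
    apply mul_left_cancel₀ hne
    linear_combination -h1
  obtain ⟨c, hc, rfl⟩ := unit_const hab
  have hx : Φ rx = 1 + (rx - 1) * algebraMap k _ c := by
    rw [← ha]; simp
  by_cases hc1 : c = 1
  · rw [hx, hc1]; simp
  exfalso
  have hd : (c - 1) / c ≠ 0 := div_ne_zero (sub_ne_zero.2 hc1) hc
  set d := (c - 1) / c with hdd
  have hcd : c * d = c - 1 := by rw [hdd]; field_simp
  have hx2 : Φ rx = (rx - algebraMap k _ d) * algebraMap k _ c := by
    have : algebraMap k (SL2Ring k) c * algebraMap k _ d = algebraMap k _ c - 1 := by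
      rw [← map_mul, hcd, map_sub, map_one]
    rw [hx]; linear_combination this
  have he : eps d hd (Φ rx) = 0 := by
    rw [hx2, map_mul, map_sub, AlgHom.commutes]
    simp [eps, MvPolynomial.algebraMap_eq]
  have hu : eps d hd (Φ rt) * (-eps d hd (Φ ru)) = 1 := by
    have h1 := congrArg (fun r => eps d hd (Φ r)) (r_rel (k := k))
    simp only [map_mul, map_add, map_one, he, zero_mul] at h1
    linear_combination h1
  obtain ⟨e, he0, he1⟩ := isUnit_const (IsUnit.of_mul_eq_one _ hu)
  obtain ⟨z, hz⟩ : (rx - algebraMap k _ d) ∣ (Φ rt - algebraMap k _ e) := by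
    apply eps_ker d hd
    rw [map_sub, he1, AlgHom.commutes, MvPolynomial.algebraMap_eq, sub_self]
  have h2 : (Φ rt - algebraMap k _ e) * algebraMap k _ c = Φ rx * z := by
    rw [hz, hx2]; ring
  have h3 := congrArg (fun r => chi (Φ.symm r)) h2
  simp only [map_mul, map_sub, AlgEquiv.symm_apply_apply, AlgEquiv.commutes, AlgHom.commutes,
    chi_x, zero_mul, chi_t] at h3
  rw [mul_eq_zero] at h3
  have hcne : algebraMap k (RatFunc k) c ≠ 0 := by
    rw [Ne, FaithfulSMul.algebraMap_eq_zero_iff]; exact hc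
  have h4 := h3.resolve_right hcne
  have h5 : algebraMap (Polynomial k) (RatFunc k) (Polynomial.X - Polynomial.C e) = 0 := by
    rw [map_sub, RatFunc.algebraMap_X, ← h4]
    congr 1
  rw [FaithfulSMul.algebraMap_eq_zero_iff] at h5
  exact Polynomial.X_sub_C_ne_zero e h5

/-! ### A valuation-theoretic lemma -/

lemma exists_val {A L Q : Type*} [CommRing A] [Field L] [Field Q] (θ : A →+* L) (χ : A →+* Q)
    (h : ∀ a, θ a = 0 → χ a = 0) :
    ∃ (V : ValuationSubring L) (g : A →+* V), (∀ a, (g a : L) = θ a) ∧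
      ∀ a, IsLocalRing.residue V (g a) = 0 ↔ χ a = 0 := by
  have hprime : (RingHom.ker χ).IsPrime := RingHom.ker_isPrime χ
  have hu : ∀ y : (RingHom.ker χ).primeCompl, IsUnit (θ y) := by
    rintro ⟨y, hy⟩
    rw [isUnit_iff_ne_zero]
    exact fun h0 => hy (h y h0)
  obtain ⟨V, hV, hloc⟩ := IsLocalRing.exists_factor_valuationRing
    (IsLocalization.lift (M := (RingHom.ker χ).primeCompl)
      (S := Localization.AtPrime (RingHom.ker χ)) (g := θ) hu)
  refine ⟨V, (RingHom.codRestrict _ V.toSubring hV).comp (algebraMap A _), ?_, ?_⟩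
  · intro a
    simp
  · intro a
    rw [IsLocalRing.residue_eq_zero_iff, IsLocalRing.mem_maximalIdeal, RingHom.comp_apply,
      map_mem_nonunits_iff, mem_nonunits_iff,
      IsLocalization.AtPrime.isUnit_to_map_iff _ (RingHom.ker χ)]
    simp [Ideal.primeCompl]

lemma exists_scale {L : Type*} [Field L] [IsAlgClosed L] (V : ValuationSubring L)
    (T U : Polynomial L) (hT : T.coeff 0 ∈ V) (hU : U.coeff 0 ∈ V)
    (hne : ∃ i, i ≠ 0 ∧ (T.coeff i ≠ 0 ∨ U.coeff i ≠ 0)) :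
    ∃ c : L, (∀ i, T.coeff i * c ^ i ∈ V) ∧ (∀ i, U.coeff i * c ^ i ∈ V) ∧
      ∃ i, i ≠ 0 ∧ (T.coeff i * c ^ i = 1 ∨ U.coeff i * c ^ i = 1) := by
  classical
  have hroot : ∀ p : ℕ × L, ∃ c : L, p.1 ≠ 0 → c ^ p.1 = p.2⁻¹ := by
    intro p
    by_cases hp : p.1 = 0
    · exact ⟨0, fun h => absurd hp h⟩
    · obtain ⟨c, hc⟩ := IsAlgClosed.exists_pow_nat_eq p.2⁻¹ (Nat.pos_of_ne_zero hp)
      exact ⟨c, fun _ => hc⟩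
  choose r hr using hroot
  let P : Finset (ℕ × L) := (T.support.erase 0).image (fun i => (i, T.coeff i)) ∪
    (U.support.erase 0).image (fun i => (i, U.coeff i))
  have hP : ∀ p, p ∈ P ↔ p.1 ≠ 0 ∧ p.2 ≠ 0 ∧ (p.2 = T.coeff p.1 ∨ p.2 = U.coeff p.1) := by
    rintro ⟨i, a⟩
    simp only [P, Finset.mem_union, Finset.mem_image, Finset.mem_erase, Polynomial.mem_support_iff,
      Prod.mk.injEq]
    constructor
    · rintro (⟨j, ⟨h1, h2⟩, rfl, rfl⟩ | ⟨j, ⟨h1, h2⟩, rfl, rfl⟩)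
      · exact ⟨h1, h2, Or.inl rfl⟩
      · exact ⟨h1, h2, Or.inr rfl⟩
    · rintro ⟨h1, h2, h3 | h3⟩
      · exact Or.inl ⟨i, ⟨h1, h3 ▸ h2⟩, rfl, h3.symm⟩
      · exact Or.inr ⟨i, ⟨h1, h3 ▸ h2⟩, rfl, h3.symm⟩
  have hPne : P.Nonempty := by
    obtain ⟨i, hi, h | h⟩ := hne
    · exact ⟨(i, T.coeff i), (hP _).2 ⟨hi, h, Or.inl rfl⟩⟩
    · exact ⟨(i, U.coeff i), (hP _).2 ⟨hi, h, Or.inr rfl⟩⟩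
  obtain ⟨p, hp, hmin⟩ := Finset.exists_min_image P (fun p => V.valuation (r p)) hPne
  have key : ∀ i a, a = T.coeff i ∨ a = U.coeff i → i ≠ 0 → a * r p ^ i ∈ V := by
    intro i a ha hi
    by_cases ha0 : a = 0
    · rw [ha0, zero_mul]; exact V.zero_mem
    · have hm := hmin (i, a) ((hP _).2 ⟨hi, ha0, ha⟩)
      have h1 : a * r (i, a) ^ i = 1 := by
        rw [hr (i, a) hi, mul_inv_cancel₀ ha0]
      rw [← V.valuation_le_one_iff, map_mul, map_pow]
      calc V.valuation a * V.valuation (r p) ^ i ≤ V.valuation a * V.valuation (r (i, a)) ^ i := by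
            gcongr
        _ = 1 := by rw [← map_pow, ← map_mul, h1, map_one]
  have hp' := (hP p).1 hp
  refine ⟨r p, ?_, ?_, p.1, hp'.1, ?_⟩
  · intro i
    by_cases hi : i = 0
    · subst hi; simpa using hT
    · exact key i _ (Or.inl rfl) hi
  · intro i
    by_cases hi : i = 0
    · subst hi; simpa using hU
    · exact key i _ (Or.inr rfl) hi
  · have h1 : p.2 * r p ^ p.1 = 1 := by rw [hr p hp'.1, mul_inv_cancel₀ hp'.2.1]
    rcases hp'.2.2 with h | h
    · left; rw [← h, h1]
    · right; rw [← h, h1]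

lemma split_tu (f : MvPolynomial (Fin 2) k) (hf : f ≠ 0) :
    ∃ (n : ℕ) (h : MvPolynomial (Fin 2) k), f = (X 0 * X 1 + 1) ^ n * h ∧ chiB h ≠ 0 := by
  have hnu : ¬ IsUnit (X 0 * X 1 + 1 : MvPolynomial (Fin 2) k) := by
    intro h
    have h1 := h.map chiB
    rw [chiB_dvd dvd_rfl] at h1
    exact not_isUnit_zero h1
  obtain ⟨n, c, hc, h⟩ := WfDvdMonoid.max_power_factor' hf hnu
  exact ⟨n, c, h, fun h0 => hc (chiB_zero h0)⟩

lemma core {L : Type*} [Field L] [IsAlgClosed L] (θ : MvPolynomial (Fin 3) k →+* L)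
    (Θ : MvPolynomial (Fin 3) k →+* Polynomial L)
    (hker : ∀ a, θ a = 0 → chi (iota a) = 0)
    (h0 : ∀ a, (Θ a).eval 0 = θ a) (hC : ∀ c, Θ (C c) = Polynomial.C (θ (C c)))
    (hx : Θ (X 2) = Polynomial.C (θ (X 2))) (f : MvPolynomial (Fin 3) k)
    (hf : Θ f = 0) (hf0 : eps0 f ≠ 0) :
    ∀ i, i ≠ 0 → (Θ (X 0)).coeff i = 0 ∧ (Θ (X 1)).coeff i = 0 := by
  by_contra hcon
  have hne : ∃ i, i ≠ 0 ∧ ((Θ (X 0)).coeff i ≠ 0 ∨ (Θ (X 1)).coeff i ≠ 0) := by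
    push Not at hcon
    obtain ⟨i, hi, h⟩ := hcon
    refine ⟨i, hi, ?_⟩
    by_cases h1 : (Θ (X 0)).coeff i = 0
    · exact Or.inr (h h1)
    · exact Or.inl h1
  obtain ⟨V, g, hg, hres⟩ := exists_val θ ((chi (k := k)).toRingHom.comp iota.toRingHom) hker
  have hres' : ∀ a, IsLocalRing.residue V (g a) = 0 ↔ chi (iota a) = 0 := hres
  have hT0 : (Θ (X 0)).coeff 0 ∈ V := by
    rw [Polynomial.coeff_zero_eq_eval_zero, h0, ← hg]; exact (g _).2
  have hU0 : (Θ (X 1)).coeff 0 ∈ V := by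
    rw [Polynomial.coeff_zero_eq_eval_zero, h0, ← hg]; exact (g _).2
  obtain ⟨c, hcT, hcU, i, hi, hcoef⟩ := exists_scale V _ _ hT0 hU0 hne
  have lift : ∀ T : Polynomial L, (∀ i, T.coeff i * c ^ i ∈ V) → ∃ T' : Polynomial V,
      T'.map V.subtype = T.comp (Polynomial.C c * Polynomial.X) := by
    intro T hT
    rw [← Polynomial.mem_lifts, Polynomial.lifts_iff_coeff_lifts]
    intro n
    rw [Polynomial.comp_C_mul_X_coeff]
    exact ⟨⟨_, hT n⟩, rfl⟩
  obtain ⟨T', hT'⟩ := lift _ hcT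
  obtain ⟨U', hU'⟩ := lift _ hcU
  have hinj : Function.Injective (Polynomial.mapRingHom V.subtype) :=
    Polynomial.map_injective _ Subtype.val_injective
  let M : MvPolynomial (Fin 3) k →+* Polynomial V :=
    eval₂Hom (Polynomial.C.comp (g.comp C)) ![T', U', Polynomial.C (g (X 2))]
  have M0 : M (X 0) = T' := by simp [M]
  have M1 : M (X 1) = U' := by simp [M]
  have M2 : M (X 2) = Polynomial.C (g (X 2)) := by simp [M]
  have MC : ∀ a, M (C a) = Polynomial.C (g (C a)) := by intro a; simp [M]
  have hM : (Polynomial.mapRingHom V.subtype).comp M =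
      (Polynomial.compRingHom (Polynomial.C c * Polynomial.X)).comp Θ := by
    apply MvPolynomial.ringHom_ext
    · intro a
      simp only [RingHom.comp_apply, MC, Polynomial.coe_mapRingHom, Polynomial.map_C, hC,
        Polynomial.coe_compRingHom_apply, Polynomial.C_comp]
      congr 1
      exact hg _
    · intro j
      fin_cases j
      · simpa [M0] using hT'
      · simpa [M1] using hU'
      · change Polynomial.map V.subtype (M (X 2)) = (Θ (X 2)).comp _
        rw [M2, hx, Polynomial.map_C, Polynomial.C_comp]
        congr 1
        exact hg _
  have hMf : M f = 0 := by
    apply hinj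
    have := DFunLike.congr_fun hM f
    simp only [RingHom.comp_apply, hf, map_zero] at this
    rw [this, map_zero]
  have hM0 : ∀ a, (M a).eval 0 = g a := by
    intro a
    apply Subtype.val_injective
    have h1 := congrArg (Polynomial.eval 0) (DFunLike.congr_fun hM a)
    simp only [RingHom.comp_apply, Polynomial.coe_mapRingHom, Polynomial.coe_compRingHom_apply,
      Polynomial.eval_comp, Polynomial.eval_mul, Polynomial.eval_X, mul_zero, h0] at h1
    rw [hg, ← h1, ← Polynomial.coeff_zero_eq_eval_zero, ← Polynomial.coeff_zero_eq_eval_zero,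
      Polynomial.coeff_map]
    rfl
  let K : MvPolynomial (Fin 3) k →+* Polynomial (IsLocalRing.ResidueField V) :=
    (Polynomial.mapRingHom (IsLocalRing.residue V)).comp M
  have K2 : K (X 2) = 0 := by
    simp only [K, RingHom.comp_apply, M2, Polynomial.coe_mapRingHom, Polynomial.map_C]
    rw [(hres' _).2 (by simp), map_zero]
  obtain ⟨f1, hf1⟩ := emb_eps0 f
  obtain ⟨n, h, hfac, hh⟩ := split_tu (eps0 f) hf0
  have Kf : K (emb (eps0 f)) = 0 := by
    have h1 := congrArg K hf1
    rw [map_mul, K2, zero_mul, map_sub] at h1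
    have h2 : K f = 0 := by simp only [K, RingHom.comp_apply, hMf, map_zero]
    rw [h2] at h1
    simpa using h1
  have Kh : K (emb h) ≠ 0 := by
    intro hK
    have h1 := congrArg (fun p => Polynomial.coeff p 0) hK
    simp only [K, RingHom.comp_apply, Polynomial.coe_mapRingHom, Polynomial.coeff_map,
      Polynomial.coeff_zero] at h1
    rw [Polynomial.coeff_zero_eq_eval_zero, hM0, hres', chi_iota, eps0_emb] at h1
    exact hh h1
  rw [hfac, map_mul, map_mul, mul_eq_zero] at Kf
  have h3 := Kf.resolve_right Kh
  rw [map_pow, map_pow] at h3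
  have h4 : K (X 0) * K (X 1) + 1 = 0 := by
    have := eq_zero_of_pow_eq_zero h3
    simpa using this
  have h5 : K (X 0) * (-K (X 1)) = 1 := by linear_combination -h4
  have d0 : (K (X 0)).natDegree = 0 :=
    Polynomial.natDegree_eq_zero_of_isUnit (IsUnit.of_mul_eq_one _ h5)
  have d1 : (K (X 1)).natDegree = 0 := by
    rw [← Polynomial.natDegree_neg]
    exact Polynomial.natDegree_eq_zero_of_isUnit (IsUnit.of_mul_eq_one _ ((mul_comm _ _).trans h5))
  have fin : ∀ (T : Polynomial L) (T' : Polynomial V),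
      T'.map V.subtype = T.comp (Polynomial.C c * Polynomial.X) → T.coeff i * c ^ i = 1 →
      (T'.map (IsLocalRing.residue V)).natDegree = 0 → False := by
    intro T T' h1 h2 h3
    have h4 := congrArg (fun p => Polynomial.coeff p i) h1
    simp only [Polynomial.coeff_map, Polynomial.comp_C_mul_X_coeff, h2] at h4
    have h5 : T'.coeff i = 1 := Subtype.val_injective h4
    have h6 := Polynomial.coeff_eq_zero_of_natDegree_lt
      (p := T'.map (IsLocalRing.residue V)) (n := i) (by omega)
    rw [Polynomial.coeff_map, h5, map_one] at h6
    exact one_ne_zero h6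
  rcases hcoef with h | h
  · exact fin _ _ hT' h (by rw [← M0]; exact d0)
  · exact fin _ _ hU' h (by rw [← M1]; exact d1)

/-! ### Automorphisms fixing `x` preserve `k[t,u,x]` -/

section
variable {L : Type*} [Field L] [Algebra k L] (jL : MvPolynomial (Fin 2) k →ₐ[k] L)

/-- The generic line `t = 0`, `u = w + λ`. -/
def thl (hj : Function.Injective jL) : SL2Ring k →ₐ[k] Polynomial L :=
  lift4 0 (Polynomial.C (jL (X 1)) + Polynomial.X) (Polynomial.C (jL (X 0)))
    (Polynomial.C (jL (X 0))⁻¹) (by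
      have h0 : jL (X 0) ≠ 0 := by
        rw [Ne, map_eq_zero_iff _ hj]; exact X_ne_zero _
      rw [← Polynomial.C_mul, mul_inv_cancel₀ h0]; simp)

/-- Evaluation at `λ = 0`. -/
def ev0 : Polynomial L →ₐ[k] L := (Polynomial.aeval (R := L) (0 : L)).restrictScalars k

lemma ev0_apply (p : Polynomial L) : ev0 (k := k) p = p.eval 0 := by
  simp [ev0, Polynomial.aeval_def]
  exact Polynomial.coeff_zero_eq_eval_zero p

lemma thl_zero (hj : Function.Injective jL) {r : SL2Ring k} (h : ev0 (k := k) (thl jL hj r) = 0) :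
    ∃ (M : ℕ) (s : SL2Ring k), rx ^ M * r = rt * s := by
  obtain ⟨n, p, hp⟩ := exists_iota r
  refine ⟨n, ?_⟩
  let e : MvPolynomial (Fin 3) k →ₐ[k] MvPolynomial (Fin 2) k := aeval ![0, X 1, X 0]
  have he : ((ev0 (k := k)).comp (thl jL hj)).comp iota = jL.comp e := by
    apply MvPolynomial.algHom_ext
    intro i
    fin_cases i
    · simp [e, thl]
    · simp [e, thl, ev0_apply]
    · simp [e, thl, ev0_apply]
  have h1 : e p = 0 := by
    apply hj
    rw [map_zero]
    have := DFunLike.congr_fun he p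
    simp only [AlgHom.comp_apply] at this
    rw [← this, ← hp, map_mul, map_mul, h, mul_zero]
  let s : MvPolynomial (Fin 2) k →ₐ[k] MvPolynomial (Fin 3) k := aeval ![X 2, X 1]
  have hs : s.comp e = aeval (Function.update (X : Fin 3 → MvPolynomial (Fin 3) k) 0 0) := by
    apply MvPolynomial.algHom_ext
    intro i
    fin_cases i <;> simp [s, e]
  have h2 := X_dvd_sub 0 p
  rw [← hs, AlgHom.comp_apply, h1, map_zero, sub_zero] at h2
  obtain ⟨q, rfl⟩ := h2
  exact ⟨iota q, by rw [hp, map_mul, iota_t]⟩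

lemma poly_t_aux (hj : Function.Injective jL) [IsAlgClosed L] (Φ : SL2Ring k ≃ₐ[k] SL2Ring k) (hx : Φ rx = rx) :
    ∃ G, iota G = Φ rt := by
  classical
  have hex := exists_iota (Φ rt)
  obtain ⟨f, hf⟩ := Nat.find_spec hex
  set N := Nat.find hex with hN
  rcases Nat.eq_zero_or_pos N with h0 | hpos
  · exact ⟨f, by rw [← hf, h0]; simp⟩
  exfalso
  obtain ⟨N', hN'⟩ : ∃ N', N = N' + 1 := ⟨N - 1, by omega⟩
  have hf0 : eps0 f ≠ 0 := by
    intro h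
    obtain ⟨f', rfl⟩ := X2_dvd h
    refine Nat.find_min hex (m := N') (by omega) ⟨f', ?_⟩
    apply mul_left_cancel₀ (rx_ne_zero (k := k))
    rw [map_mul, iota_x, hN'] at hf
    rw [← hf]; ring
  have hXf : ¬ (X 2 ∣ f) := by
    rintro ⟨q, rfl⟩
    exact hf0 (by simp)
  have hx' : Φ.symm rx = rx := by rw [AlgEquiv.symm_apply_eq, hx]
  let Λ : SL2Ring k →ₐ[k] Polynomial L := (thl jL hj).comp (Φ.symm : SL2Ring k →ₐ[k] SL2Ring k)
  have hΛ : ∀ r, Λ r = thl jL hj (Φ.symm r) := fun r => rfl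
  have hΛx : Λ rx = Polynomial.C (jL (X 0)) := by rw [hΛ, hx']; simp [thl]
  have hchif : chi (iota f) = 0 := by
    rw [← hf, hN', map_mul, map_pow, chi_x]; simp
  have hcore := core (((ev0 (k := k)).comp (Λ.comp iota)) : MvPolynomial (Fin 3) k →ₐ[k] L).toRingHom
    (Λ.comp iota).toRingHom
    (by
      intro a ha
      obtain ⟨M, s, hs⟩ := thl_zero jL hj (r := Φ.symm (iota a)) ha
      have h1 := congrArg Φ hs
      rw [map_mul, map_mul, map_pow, hx, AlgEquiv.apply_symm_apply] at h1
      obtain ⟨m, q, hq⟩ := exists_iota (Φ s)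
      have h2 : X 2 ^ (N + m + M) * a = f * q := by
        apply iota_injective
        rw [map_mul, map_mul, map_pow, iota_x, ← hf, ← hq]
        linear_combination rx ^ (N + m) * h1
      obtain ⟨q', rfl⟩ : X 2 ^ (N + m + M) ∣ q :=
        (X_prime (R := k) (i := (2 : Fin 3))).pow_dvd_of_dvd_mul_left _ hXf (Dvd.intro _ h2)
      have h3 : a = f * q' := by
        apply mul_left_cancel₀ (pow_ne_zero (N + m + M) (X_ne_zero (R := k) (2 : Fin 3)))
        rw [h2]; ring
      rw [h3, map_mul, map_mul, hchif, zero_mul])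
    (by
      intro a
      exact (ev0_apply (k := k) _).symm)
    (by
      intro c
      change (Λ.comp iota) (C c) = Polynomial.C (((ev0 (k := k)).comp (Λ.comp iota)) (C c))
      rw [← MvPolynomial.algebraMap_eq, AlgHom.commutes, AlgHom.commutes]
      rfl)
    (by
      change Λ (iota (X 2)) = Polynomial.C (ev0 (k := k) (Λ (iota (X 2))))
      rw [iota_x, hΛx, ev0_apply, Polynomial.eval_C])
    f
    (by
      change Λ (iota f) = 0
      rw [← hf, hΛ, map_mul, AlgEquiv.symm_apply_apply, map_mul]
      simp [thl])
    hf0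
  have const : ∀ p : Polynomial L, (∀ i, i ≠ 0 → p.coeff i = 0) →
      p = Polynomial.CAlgHom (R := k) (ev0 (k := k) p) := by
    intro p hp
    rw [ev0_apply, ← Polynomial.coeff_zero_eq_eval_zero]
    ext i
    by_cases hi : i = 0
    · subst hi; simp
    · rw [hp i hi]; simp [Polynomial.coeff_C, hi]
  have e0 : Λ rt = Polynomial.CAlgHom (R := k) (ev0 (k := k) (Λ rt)) :=
    const _ fun i hi => by
      have := (hcore i hi).1
      change (Λ (iota (X 0))).coeff i = 0 at this
      rwa [iota_t] at this
  have e1 : Λ ru = Polynomial.CAlgHom (R := k) (ev0 (k := k) (Λ ru)) :=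
    const _ fun i hi => by
      have := (hcore i hi).2
      change (Λ (iota (X 1))).coeff i = 0 at this
      rwa [iota_u] at this
  have hall : Λ = ((Polynomial.CAlgHom (R := k)).comp (ev0 (k := k))).comp Λ := by
    apply r_hom_ext' e0 e1
    · simp [hΛx, ev0_apply]
    · rw [hΛx, Ne, Polynomial.C_eq_zero, map_eq_zero_iff _ hj]
      exact X_ne_zero _
  have h5 := DFunLike.congr_fun hall (Φ ru)
  simp only [AlgHom.comp_apply, hΛ, AlgEquiv.symm_apply_apply] at h5
  simp [thl, ev0_apply] at h5
end

lemma poly_t (Φ : SL2Ring k ≃ₐ[k] SL2Ring k) (hx : Φ rx = rx) : ∃ G, iota G = Φ rt := by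
  let B := MvPolynomial (Fin 2) k
  let L := AlgebraicClosure (FractionRing B)
  let jL : B →ₐ[k] L := (IsScalarTower.toAlgHom k (FractionRing B) L).comp
    (IsScalarTower.toAlgHom k B (FractionRing B))
  have hj : Function.Injective jL := by
    intro a b h
    have h1 : algebraMap (FractionRing B) L (algebraMap B (FractionRing B) a) =
      algebraMap (FractionRing B) L (algebraMap B (FractionRing B) b) := h
    exact FaithfulSMul.algebraMap_injective B (FractionRing B)
      (FaithfulSMul.algebraMap_injective _ _ h1)
  exact poly_t_aux jL hj Φ hx

/-- The swap of `t` and `u`. -/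
def swapE : SL2Ring k ≃ₐ[k] SL2Ring k :=
  AlgEquiv.ofAlgHom (lift4 ru rt rx ry (by rw [r_rel]; ring))
    (lift4 ru rt rx ry (by rw [r_rel]; ring))
    (by apply r_hom_ext <;> simp) (by apply r_hom_ext <;> simp)

lemma poly_u (Φ : SL2Ring k ≃ₐ[k] SL2Ring k) (hx : Φ rx = rx) : ∃ F, iota F = Φ ru := by
  obtain ⟨F, hF⟩ := poly_t (swapE.trans Φ) (by simp [swapE, hx])
  exact ⟨F, by rw [hF]; simp [swapE]⟩

/-! ### The Jacobian of an extendable automorphism -/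

/-- The Jacobian with respect to the first two variables. -/
def jac3 (G F : MvPolynomial (Fin 3) k) : MvPolynomial (Fin 3) k :=
  pderiv 0 G * pderiv 1 F - pderiv 1 G * pderiv 0 F

lemma jac3_comp (G F P Q : MvPolynomial (Fin 3) k) :
    jac3 (aeval ![G, F, X 2] P) (aeval ![G, F, X 2] Q) =
      aeval ![G, F, X 2] (jac3 P Q) * jac3 G F := by
  simp only [jac3, chain, Fin.sum_univ_three, map_sub, map_mul, Matrix.cons_val_zero,
    Matrix.cons_val_one, Matrix.cons_val]
  rw [show pderiv (0 : Fin 3) (X 2 : MvPolynomial (Fin 3) k) = 0 from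
      pderiv_X_of_ne (by decide),
    show pderiv (1 : Fin 3) (X 2 : MvPolynomial (Fin 3) k) = 0 from
      pderiv_X_of_ne (by decide)]
  ring

/-- The Jacobian in two variables. -/
def jac2 (p q : MvPolynomial (Fin 2) k) : MvPolynomial (Fin 2) k :=
  pderiv 0 p * pderiv 1 q - pderiv 1 p * pderiv 0 q

lemma jac2_eps0 (G F : MvPolynomial (Fin 3) k) :
    jac2 (eps0 G) (eps0 F) = eps0 (jac3 G F) := by
  simp only [jac2, jac3, eps0, chain, Fin.sum_univ_three, map_sub, map_mul, Matrix.cons_val_zero,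
    Matrix.cons_val_one, Matrix.cons_val]
  simp

lemma rho_iota (P : MvPolynomial (Fin 3) k) :
    rho1Star k (iota P) = aeval ![X 1, X 0, 1] P := by
  have : (rho1Star k).comp iota = aeval ![X 1, X 0, 1] := by
    apply MvPolynomial.algHom_ext
    intro i
    fin_cases i <;> simp
  exact DFunLike.congr_fun this P

lemma jac2_rho (G F : MvPolynomial (Fin 3) k) :
    jac2 (rho1Star k (iota F)) (rho1Star k (iota G)) = rho1Star k (iota (jac3 G F)) := by
  simp only [jac2, jac3, rho_iota, chain, Fin.sum_univ_three, map_sub, map_mul,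
    Matrix.cons_val_zero, Matrix.cons_val_one, Matrix.cons_val]
  simp
  ring

lemma prod_case {p q : MvPolynomial (Fin 2) k} {j : k} (hj : jac2 p q = C j) (hj0 : j ≠ 0)
    {c : k} (hc : c ≠ 0) (h : p * q + 1 = (X 0 * X 1 + 1) * C c) : j = 1 ∨ j = -1 := by
  have hc1 : c = 1 := by
    by_contra hc1
    have e := congrArg constantCoeff h
    have e0 := congrArg (fun z => constantCoeff (pderiv 0 z)) h
    have e1 := congrArg (fun z => constantCoeff (pderiv 1 z)) h
    have ej := congrArg constantCoeff hj
    simp [pderiv_X_of_ne] at e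
    simp [pderiv_mul, pderiv_X_of_ne] at e0 e1
    simp [jac2] at ej
    have : constantCoeff p * constantCoeff q * j = 0 := by
      rw [← ej]
      linear_combination (constantCoeff p * constantCoeff (pderiv 1 q)) * e0 -
        (constantCoeff p * constantCoeff (pderiv 0 q)) * e1
    have h2 : constantCoeff p * constantCoeff q = c - 1 := by linear_combination e
    rw [h2] at this
    exact (mul_ne_zero (sub_ne_zero.2 hc1) hj0) this
  have hpq : p * q = X 0 * X 1 := by
    rw [hc1, C_1] at h; linear_combination h
  have aux : ∀ p q : MvPolynomial (Fin 2) k, p * q = X 0 * X 1 → X 0 ∣ p →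
      ∃ a b : k, (a * b = 1) ∧
        ((p = C a * X 0 ∧ q = C b * X 1) ∨ (p = C a * (X 0 * X 1) ∧ q = C b)) := by
    rintro p q hpq ⟨p', rfl⟩
    have h1 : p' * q = X 1 := by
      apply mul_left_cancel₀ (X_ne_zero (R := k) (0 : Fin 2))
      rw [← hpq]; ring
    rcases (X_prime (R := k) (i := (1 : Fin 2))).dvd_or_dvd (dvd_of_eq h1.symm) with ⟨z, rfl⟩ | ⟨z, rfl⟩
    · have h2 : z * q = 1 := by
        apply mul_left_cancel₀ (X_ne_zero (R := k) (1 : Fin 2))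
        linear_combination h1
      obtain ⟨a, ha, rfl⟩ := isUnit_const (IsUnit.of_mul_eq_one _ h2)
      obtain ⟨b, hb, rfl⟩ := isUnit_const (IsUnit.of_mul_eq_one _ ((mul_comm _ _).trans h2))
      refine ⟨a, b, ?_, Or.inr ⟨by ring, rfl⟩⟩
      rw [← C_mul, ← C_1] at h2
      exact C_injective _ _ h2
    · have h2 : p' * z = 1 := by
        apply mul_left_cancel₀ (X_ne_zero (R := k) (1 : Fin 2))
        linear_combination h1
      obtain ⟨a, ha, rfl⟩ := isUnit_const (IsUnit.of_mul_eq_one _ h2)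
      obtain ⟨b, hb, rfl⟩ := isUnit_const (IsUnit.of_mul_eq_one _ ((mul_comm _ _).trans h2))
      refine ⟨a, b, ?_, Or.inl ⟨by ring, by ring⟩⟩
      rw [← C_mul, ← C_1] at h2
      exact C_injective _ _ h2
  rcases (X_prime (R := k) (i := (0 : Fin 2))).dvd_or_dvd
    (show (X 0 : MvPolynomial (Fin 2) k) ∣ p * q from hpq ▸ Dvd.intro _ rfl) with hd | hd
  · obtain ⟨a, b, hab, ⟨rfl, rfl⟩ | ⟨rfl, rfl⟩⟩ := aux p q hpq hd
    · left
      simp [jac2, pderiv_mul, pderiv_X_of_ne] at hj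
      rw [← C_mul] at hj
      rw [← C_injective _ _ hj, hab]
    · exfalso
      simp [jac2] at hj
      exact hj0 (C_eq_zero.1 hj.symm)
  · obtain ⟨a, b, hab, ⟨rfl, rfl⟩ | ⟨rfl, rfl⟩⟩ := aux q p ((mul_comm _ _).trans hpq) hd
    · right
      simp [jac2, pderiv_mul, pderiv_X_of_ne] at hj
      rw [← C_mul, ← C_neg] at hj
      rw [← C_injective _ _ hj, mul_comm, hab]
    · exfalso
      simp [jac2] at hj
      exact hj0 (C_eq_zero.1 hj.symm)

theorem jacobian_of_ext (φ : MvPolynomial (Fin 2) k ≃ₐ[k] MvPolynomial (Fin 2) k) (h : Ext φ) :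
    pderiv 0 (φ (X 0)) * pderiv 1 (φ (X 1)) - pderiv 1 (φ (X 0)) * pderiv 0 (φ (X 1)) = 1 ∨
    pderiv 0 (φ (X 0)) * pderiv 1 (φ (X 1)) - pderiv 1 (φ (X 0)) * pderiv 0 (φ (X 1)) = -1 := by
  obtain ⟨Φ, hΦ⟩ := h
  have e1 : ∀ r, φ (rho1Star k r) = rho1Star k (Φ r) := fun r => DFunLike.congr_fun hΦ r
  have hx : Φ rx = rx := ext_x e1
  have hx' : Φ.symm rx = rx := by rw [AlgEquiv.symm_apply_eq, hx]
  have pres : ∀ Φ : SL2Ring k ≃ₐ[k] SL2Ring k, Φ rx = rx → ∃ G F : MvPolynomial (Fin 3) k,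
      iota G = Φ rt ∧ iota F = Φ ru ∧
      (∀ P, iota (aeval ![G, F, X 2] P) = Φ (iota P)) ∧
      ((X 0 * X 1 + 1 : MvPolynomial (Fin 2) k) ∣ eps0 G * eps0 F + 1) := by
    intro Φ hx
    obtain ⟨G, hG⟩ := poly_t Φ hx
    obtain ⟨F, hF⟩ := poly_u Φ hx
    refine ⟨G, F, hG, hF, ?_, ?_⟩
    · intro P
      have : iota.comp (aeval ![G, F, X 2]) = (Φ : SL2Ring k →ₐ[k] SL2Ring k).comp iota := by
        apply MvPolynomial.algHom_ext
        intro i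
        fin_cases i
        · simp [hG]
        · simp [hF]
        · simp [hx]
      exact DFunLike.congr_fun this P
    · apply chiB_zero
      have h1 := congrArg (fun r => chi (Φ r)) (r_rel (k := k))
      simp only [map_mul, map_add, map_one, hx, chi_x, zero_mul, ← hG, ← hF, chi_iota] at h1
      rw [map_add, map_mul, map_one, ← h1]
  obtain ⟨G, F, hG, hF, hcomp, hdiv⟩ := pres Φ hx
  obtain ⟨G', F', hG', hF', hcomp', hdiv'⟩ := pres Φ.symm hx'
  have inv1 : ∀ P, aeval ![G, F, X 2] (aeval ![G', F', X 2] P) = P := by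
    intro P
    apply iota_injective
    rw [hcomp, hcomp', AlgEquiv.apply_symm_apply]
  have invG : aeval ![G, F, X 2] G' = X 0 := by simpa using inv1 (X 0)
  have invF : aeval ![G, F, X 2] F' = X 1 := by simpa using inv1 (X 1)
  -- the Jacobian is constant
  have hJ : aeval ![G, F, X 2] (jac3 G' F') * jac3 G F = 1 := by
    rw [← jac3_comp, invG, invF]
    simp [jac3, pderiv_X_of_ne]
  obtain ⟨j, hj0, hj⟩ := isUnit_const (IsUnit.of_mul_eq_one _ ((mul_comm _ _).trans hJ))
  have hjac : jac2 (φ (X 0)) (φ (X 1)) = C j := by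
    rw [← rho_u, ← rho_t, e1, e1, ← hG, ← hF, jac2_rho, hj, rho_iota, aeval_C]
    rfl
  have hjac0 : jac2 (eps0 G) (eps0 F) = C j := by
    rw [jac2_eps0, hj]
    simp [eps0]
  -- the fibre at zero
  obtain ⟨c, hc⟩ := hdiv
  obtain ⟨c', hc'⟩ := hdiv'
  let τ : MvPolynomial (Fin 2) k →ₐ[k] MvPolynomial (Fin 2) k := aeval ![eps0 G, eps0 F]
  have hτ : ∀ P, τ (eps0 P) = eps0 (aeval ![G, F, X 2] P) := by
    intro P
    have : τ.comp eps0 = eps0.comp (aeval ![G, F, X 2]) := by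
      apply MvPolynomial.algHom_ext
      intro i
      fin_cases i <;> simp [τ]
    exact DFunLike.congr_fun this P
  have hcu : c * τ c' = 1 := by
    have h1 := congrArg τ hc'
    rw [map_add, map_mul, map_mul, hτ, hτ, invG, invF, map_add, map_mul, map_one] at h1
    have t0 : τ (X 0) = eps0 G := by simp [τ]
    have t1 : τ (X 1) = eps0 F := by simp [τ]
    rw [t0, t1, eps0_0, eps0_1, hc] at h1
    have hne : (X 0 * X 1 + 1 : MvPolynomial (Fin 2) k) ≠ 0 := by
      intro h0
      have := congrArg constantCoeff h0
      simp at this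
    apply mul_left_cancel₀ hne
    linear_combination -h1
  obtain ⟨d, hd, rfl⟩ := isUnit_const (IsUnit.of_mul_eq_one _ hcu)
  have hfin := prod_case hjac0 hj0 hd hc
  have hjac' : pderiv 0 (φ (X 0)) * pderiv 1 (φ (X 1)) -
      pderiv 1 (φ (X 0)) * pderiv 0 (φ (X 1)) = C j := hjac
  rw [hjac']
  rcases hfin with rfl | rfl
  · left; simp
  · right; simp

end SL2Ext

/-- **Theorem 2 (Blanc–van Santen).** An automorphism `φ` of `𝔸² = Spec k[s,t]` extends to an
automorphism of `SL₂` via the standard embedding `ρ₁` if and only if its Jacobian determinant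
`(∂f/∂s)(∂g/∂t) − (∂f/∂t)(∂g/∂s)` (where `f = φ(s)`, `g = φ(t)`) equals `1` or `-1`. -/
theorem extends_iff_jacobian_eq_pm_one
    (φ : MvPolynomial (Fin 2) k ≃ₐ[k] MvPolynomial (Fin 2) k) :
    (∃ Φ : SL2Ring k ≃ₐ[k] SL2Ring k,
        φ.toAlgHom.comp (rho1Star k) = (rho1Star k).comp Φ.toAlgHom) ↔
      (pderiv 0 (φ (X 0)) * pderiv 1 (φ (X 1)) - pderiv 1 (φ (X 0)) * pderiv 0 (φ (X 1)) = 1 ∨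
       pderiv 0 (φ (X 0)) * pderiv 1 (φ (X 1)) - pderiv 1 (φ (X 0)) * pderiv 0 (φ (X 1)) = -1) := by
  exact ⟨fun h => SL2Ext.jacobian_of_ext φ h, fun h => SL2Ext.ext_of_jacobian φ h⟩
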